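/- Let B be the backward shift on ℓ^p (1 ≤ p < ∞) and let (λ_n) be a sequence of positive reals tending to infinity such that λ_{j'k}/λ_{jk} → 0 as k → ∞ for all integers j > j' ≥ 1. Then the sequence of operators (λ_n B^n) has property P_{AP}: for each nonempty open set U there exists x ∈ ℓ^p such that {n ∈ ℕ : λ_n B^n x ∈ U} contains arbitrarily long arithmetic progressions. -/

import Mathlib

open Filter Topology ENNReal

def ContainsAPs (A : Set ℕ) : Prop :=
  ∀ m : ℕ, ∃ a k : ℕ, 1 ≤ a ∧ 1 ≤ k ∧ ∀ j ≤ m, a + j * k ∈ A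

namespace PAP

variable {p : ℝ≥0∞} [Fact (1 ≤ p)]

abbrev E (p : ℝ≥0∞) := lp (fun _ : ℕ => ℝ) p

theorem ppos (hp : p ≠ ⊤) : 0 < p.toReal :=
  ENNReal.toReal_pos (zero_lt_one.trans_le (Fact.out : 1 ≤ p)).ne' hp

theorem mem_shift (hp : p ≠ ⊤) (n : ℕ) (x : E p) :
    Memℓp (fun i : ℕ => (x : ℕ → ℝ) (i + n)) p := by
  have h := (memℓp_gen_iff (ppos hp)).1 (lp.memℓp x)
  exact (memℓp_gen_iff (ppos hp)).2 (h.comp_injective (add_left_injective n))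

noncomputable def T (hp : p ≠ ⊤) (n : ℕ) : E p →L[ℝ] E p :=
  LinearMap.mkContinuous
    { toFun := fun x => ⟨fun i => (x : ℕ → ℝ) (i + n), mem_shift hp n x⟩
      map_add' := fun x y => by ext i; rfl
      map_smul' := fun c x => by ext i; rfl } 1 (by
    intro x
    rw [one_mul]
    have h0 := ppos hp
    rw [← Real.rpow_le_rpow_iff (norm_nonneg _) (norm_nonneg _) h0,
      lp.norm_rpow_eq_tsum h0, lp.norm_rpow_eq_tsum h0]
    have h := (memℓp_gen_iff h0).1 (lp.memℓp x)
    exact tsum_comp_le_tsum_of_inj h (fun i => by positivity) (add_left_injective n))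

theorem T_apply (hp : p ≠ ⊤) (n : ℕ) (x : E p) (i : ℕ) :
    (T hp n x : ℕ → ℝ) i = (x : ℕ → ℝ) (i + n) := rfl

noncomputable def fwd (p : ℝ≥0∞) [Fact (1 ≤ p)] (c : ℕ → ℝ) (N n : ℕ) : E p :=
  ∑ i ∈ Finset.range N, lp.single p (i + n) (c i)

theorem norm_fwd (c : ℕ → ℝ) (N n : ℕ) :
    ‖fwd p c N n‖ ≤ ∑ i ∈ Finset.range N, ‖c i‖ := by
  refine (norm_sum_le _ _).trans (Finset.sum_le_sum fun i _ => ?_)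
  rw [lp.norm_single (zero_lt_one.trans_le (Fact.out : 1 ≤ p))]

theorem T_fwd_ge (hp : p ≠ ⊤) (c : ℕ → ℝ) (N n a : ℕ) :
    T hp a (fwd p c N (n + a)) = fwd p c N n := by
  unfold fwd
  rw [map_sum]
  refine Finset.sum_congr rfl fun i _ => ?_
  ext t
  rw [T_apply, lp.single_apply, lp.single_apply]
  simp only [Pi.single_apply]
  congr 1
  apply propext
  omega

theorem T_fwd_lt (hp : p ≠ ⊤) (c : ℕ → ℝ) (N n a : ℕ) (h : n + N ≤ a) :
    T hp a (fwd p c N n) = 0 := by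
  unfold fwd
  rw [map_sum]
  refine Finset.sum_eq_zero fun i hi => ?_
  have := Finset.mem_range.1 hi
  ext t
  rw [T_apply, lp.single_apply]
  simp only [Pi.single_apply]
  rw [if_neg (by omega)]
  rfl

theorem exists_fwd (hp : p ≠ ⊤) (U : Set (E p)) (hU : IsOpen U) (hne : U.Nonempty) :
    ∃ c N, fwd p c N 0 ∈ U := by
  obtain ⟨y, hy⟩ := hne
  have h := (lp.hasSum_single hp y).tendsto_sum_nat
  obtain ⟨N, hN⟩ := (h.eventually (hU.mem_nhds hy)).exists
  exact ⟨y, N, by simpa [fwd] using (show _ ∈ U from hN)⟩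

theorem smul_fwd_tendsto (c : ℕ → ℝ) (N : ℕ) (r : ℕ → ℝ) (s : ℕ → ℕ)
    (hr : Tendsto r atTop (𝓝 0)) :
    Tendsto (fun k => r k • fwd p c N (s k)) atTop (𝓝 0) := by
  apply squeeze_zero_norm (a := fun k => ‖r k‖ * ∑ i ∈ Finset.range N, ‖c i‖)
  · intro k
    rw [norm_smul]
    exact mul_le_mul_of_nonneg_left (norm_fwd _ _ _) (norm_nonneg _)
  · simpa using hr.norm.mul_const (∑ i ∈ Finset.range N, ‖c i‖)

theorem key (hp : p ≠ ⊤) (l : ℕ → ℝ) (hpos : ∀ n, 0 < l n) (htop : Tendsto l atTop atTop)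
    (hratio : ∀ j j' : ℕ, 1 ≤ j' → j' < j →
        Tendsto (fun k : ℕ => l (j' * k) / l (j * k)) atTop (𝓝 0))
    (U : Set (E p)) (hU : IsOpen U) (hne : U.Nonempty) (m : ℕ)
    (V : Set (E p)) (hV : IsOpen V) (hVne : V.Nonempty) :
    ∃ x ∈ V, ∃ k, 1 ≤ k ∧ ∀ j ∈ Finset.Icc 1 (m + 1), l (j * k) • T hp (j * k) x ∈ U := by
  obtain ⟨c, N, hc⟩ := exists_fwd hp V hV hVne
  obtain ⟨d, M, hd⟩ := exists_fwd hp U hU hne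
  let J := Finset.Icc 1 (m + 1)
  let x : ℕ → E p := fun k => fwd p c N 0 + ∑ i ∈ J, (l (i * k))⁻¹ • fwd p d M (i * k)
  have hJ : ∀ j ∈ J, 1 ≤ j := fun j hj => (Finset.mem_Icc.1 hj).1
  have hx : Tendsto x atTop (𝓝 (fwd p c N 0)) := by
    have : Tendsto (fun k => ∑ i ∈ J, (l (i * k))⁻¹ • fwd p d M (i * k)) atTop
        (𝓝 (∑ i ∈ J, (0 : E p))) := by
      refine tendsto_finsetSum _ fun i hi => smul_fwd_tendsto _ _ _ _ ?_
      exact tendsto_inv_atTop_zero.comp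
        (htop.comp (tendsto_id.const_mul_atTop' (hJ i hi)))
    simpa [x] using this.const_add (fwd p c N 0)
  have hT : ∀ j ∈ J, Tendsto (fun k => l (j * k) • T hp (j * k) (x k)) atTop
      (𝓝 (fwd p d M 0)) := by
    intro j hj
    have hj1 := hJ j hj
    have h1 : Tendsto (fun k => l (j * k) • T hp (j * k) (fwd p c N 0)) atTop (𝓝 0) := by
      refine tendsto_const_nhds.congr' ?_
      filter_upwards [eventually_ge_atTop N] with k hk
      rw [T_fwd_lt hp _ _ _ _ (by nlinarith), smul_zero]
    have h2 : ∀ i ∈ J, Tendsto (fun k => l (j * k) •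
        T hp (j * k) ((l (i * k))⁻¹ • fwd p d M (i * k))) atTop
        (𝓝 (if i = j then fwd p d M 0 else 0)) := by
      intro i hi
      have hi1 := hJ i hi
      rcases lt_trichotomy i j with h | h | h
      · rw [if_neg h.ne]
        refine tendsto_const_nhds.congr' ?_
        filter_upwards [eventually_ge_atTop M] with k hk
        rw [map_smul, T_fwd_lt hp _ _ _ _ (by nlinarith), smul_zero, smul_zero]
      · subst h
        rw [if_pos rfl]
        refine tendsto_const_nhds.congr fun k => ?_
        have := T_fwd_ge hp d M 0 (i * k)
        rw [zero_add] at this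
        rw [map_smul, this, smul_smul, mul_inv_cancel₀ (hpos _).ne', one_smul]
      · rw [if_neg h.ne']
        refine (smul_fwd_tendsto d M _ (fun k => (i - j) * k) (hratio i j hj1 h)).congr
          fun k => ?_
        have := T_fwd_ge hp d M ((i - j) * k) (j * k)
        rw [← add_mul, Nat.sub_add_cancel h.le] at this
        rw [map_smul, this, smul_smul, div_eq_mul_inv]
    have h3 := h1.add (tendsto_finsetSum J h2)
    rw [Finset.sum_ite_eq' J j, if_pos hj, zero_add] at h3
    refine h3.congr fun k => ?_
    simp only [x, map_add, map_sum, smul_add, Finset.smul_sum]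
  have e1 := hx.eventually (hV.mem_nhds hc)
  have e2 : ∀ᶠ k in atTop, ∀ j ∈ J, l (j * k) • T hp (j * k) (x k) ∈ U :=
    (Finset.eventually_all J).2 fun j hj => (hT j hj).eventually (hU.mem_nhds hd)
  obtain ⟨k, hk1, hk2, hk3⟩ := (e1.and (e2.and (eventually_ge_atTop 1))).exists
  exact ⟨x k, hk1, k, hk3, hk2⟩

end PAP

theorem weighted_shift_sequence_has_P_AP
    (p : ℝ≥0∞) [Fact (1 ≤ p)] (hp' : p ≠ ⊤)
    (l : ℕ → ℝ) (hpos : ∀ n, 0 < l n) (htop : Tendsto l atTop atTop)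
    (hratio : ∀ j j' : ℕ, 1 ≤ j' → j' < j →
        Tendsto (fun k : ℕ => l (j' * k) / l (j * k)) atTop (𝓝 0)) :
    ∀ U : Set (lp (fun _ : ℕ => ℝ) p), IsOpen U → U.Nonempty →
      ∃ x : lp (fun _ : ℕ => ℝ) p,
        ContainsAPs {n : ℕ | ∃ y ∈ U,
          ∀ i : ℕ, (y : ℕ → ℝ) i = l n * (x : ℕ → ℝ) (i + n)} := by
  intro U hU hne
  let G : ℕ → Set (PAP.E p) := fun m => {x | ∃ k, 1 ≤ k ∧
    ∀ j ∈ Finset.Icc 1 (m + 1), l (j * k) • PAP.T hp' (j * k) x ∈ U}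
  have hG : ∀ m, IsOpen (G m) := by
    intro m
    have : G m = ⋃ k, ⋃ (_ : 1 ≤ k), ⋂ j ∈ Finset.Icc 1 (m + 1),
        (fun x => l (j * k) • PAP.T hp' (j * k) x) ⁻¹' U := by
      ext x; simp [G]
    rw [this]
    refine isOpen_iUnion fun k => isOpen_iUnion fun _ => isOpen_biInter_finset fun j _ => ?_
    exact hU.preimage ((PAP.T hp' (j * k)).continuous.const_smul (l (j * k)))
  have hD : ∀ m, Dense (G m) := by
    intro m
    rw [dense_iff_inter_open]
    intro V hV hVne
    exact PAP.key hp' l hpos htop hratio U hU hne m V hV hVne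
  obtain ⟨x, hx⟩ := (dense_iInter_of_isOpen_nat hG hD).nonempty
  refine ⟨x, fun m => ?_⟩
  obtain ⟨k, hk, h⟩ := Set.mem_iInter.1 hx m
  refine ⟨k, k, hk, hk, fun j hj => ?_⟩
  have hjk : k + j * k = (j + 1) * k := by ring
  rw [hjk]
  exact ⟨_, h (j + 1) (Finset.mem_Icc.2 ⟨by omega, by omega⟩), fun i => rfl⟩
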